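/- Let m and n be positive integers. There exists a (totally filled) Heffter array H(m,n) — that is, a function A : Fin m → Fin n → ZMod (2*m*n+1) such that every row sums to 0, every column sums to 0, and for every nonzero x in ZMod (2*m*n+1) there is exactly one cell (i,j) with A i j = x or A i j = -x — if and only if m ≥ 3 and n ≥ 3. -/

import Mathlib

/-!
An array with fewer than three rows is impossible: a column with a single entry forces that entry
to be zero, and the two entries of a column of length two represent the same pair `{x, -x}`.

Conversely, if `K + l = m * n`, then the evens `2, …, 2 K` and the odds `1, …, 2 l - 1` represent
every nonzero residue modulo `2 * m * n + 1` up to sign, so it suffices to arrange these integers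
with suitable signs in an array with zero sums. If `m` and `n` are even, the array is tiled by
`4 × 4`, `4 × 6` and `6 × 6` arrays with entries `± (a + 2 * i)` in which `a` cancels. Otherwise one
starts from a small core and adds four columns (or rows) at a time. Twelve integers `b`, `b + 2`,
`c`, `c + 2`, `u`, `u + d`, `v`, `v + d` and four sums of these fill a `3 × 4` array with zero sums,
and consecutive evens extend it to more rows. If `b`, `c` climb by four and `u`, `v` descend by two
from one such block to the next, then `L` blocks sweep out intervals of evens and of odds. The gaps
between these intervals have lengths independent of `L`, so the integers in them are linear forms
in `L`, and arranging those in the core is a finite verification, valid for all `L` at once.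
-/

open scoped Pointwise

section ZeroSumCover

variable {G H : Type*} [AddCommGroup G] [AddCommGroup H]

/-- `S` can be arranged, up to the signs of its elements, in an `m × n` array all of whose rows and
columns sum to zero. Only covering is required: that the array has no other entries is recovered
at the end by counting. -/
def ZeroSumCover (m n : ℕ) (S : Set G) : Prop :=
  ∃ A : Fin m → Fin n → G, (∀ i, ∑ j, A i j = 0) ∧ (∀ j, ∑ i, A i j = 0) ∧
    ∀ z ∈ S, ∃ i j, A i j = z ∨ A i j = -z

namespace ZeroSumCover

variable {m m' n n' : ℕ} {S S' : Set G}

theorem mono (h : ZeroSumCover m n S') (hS : S ⊆ S' ∪ -S') : ZeroSumCover m n S := by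
  obtain ⟨A, row, col, cover⟩ := h
  refine ⟨A, row, col, fun z hz ↦ ?_⟩
  rcases hS hz with hz | hz
  · exact cover z hz
  · simpa only [neg_neg, or_comm] using cover (-z) hz

theorem mono_subset (h : ZeroSumCover m n S') (hS : S ⊆ S') : ZeroSumCover m n S :=
  h.mono (hS.trans Set.subset_union_left)

theorem map (h : ZeroSumCover m n S) (f : G →+ H) : ZeroSumCover m n (f '' S) := by
  obtain ⟨A, row, col, cover⟩ := h
  refine ⟨fun i j ↦ f (A i j), fun i ↦ ?_, fun j ↦ ?_, ?_⟩
  · rw [← map_sum, row, map_zero]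
  · rw [← map_sum, col, map_zero]
  · rintro _ ⟨z, hz, rfl⟩
    obtain ⟨i, j, h | h⟩ := cover z hz
    · exact ⟨i, j, .inl (congrArg f h)⟩
    · exact ⟨i, j, .inr ((congrArg f h).trans (map_neg f z))⟩

theorem transpose (h : ZeroSumCover m n S) : ZeroSumCover n m S := by
  obtain ⟨A, row, col, cover⟩ := h
  exact ⟨fun j i ↦ A i j, col, row, fun z hz ↦ (cover z hz).elim fun i ⟨j, h⟩ ↦ ⟨j, i, h⟩⟩

theorem hcat (h : ZeroSumCover m n S) (h' : ZeroSumCover m n' S') :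
    ZeroSumCover m (n + n') (S ∪ S') := by
  obtain ⟨A, row, col, cover⟩ := h
  obtain ⟨A', row', col', cover'⟩ := h'
  refine ⟨fun i ↦ Fin.append (A i) (A' i), fun i ↦ ?_, fun j ↦ ?_, ?_⟩
  · simp only [Fin.sum_univ_add, Fin.append_left, Fin.append_right, row, row', add_zero]
  · refine Fin.addCases (fun j ↦ ?_) (fun j ↦ ?_) j
    · simpa only [Fin.append_left] using col j
    · simpa only [Fin.append_right] using col' j
  · rintro z (hz | hz)
    · obtain ⟨i, j, h⟩ := cover z hz
      exact ⟨i, Fin.castAdd n' j, by simpa only [Fin.append_left] using h⟩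
    · obtain ⟨i, j, h⟩ := cover' z hz
      exact ⟨i, Fin.natAdd n j, by simpa only [Fin.append_right] using h⟩

theorem vcat (h : ZeroSumCover m n S) (h' : ZeroSumCover m' n S') :
    ZeroSumCover (m + m') n (S ∪ S') :=
  (h.transpose.hcat h'.transpose).transpose

theorem empty (m : ℕ) : ZeroSumCover m 0 (∅ : Set G) :=
  ⟨fun _ ↦ Fin.elim0, fun _ ↦ Fin.sum_univ_zero _, fun j ↦ j.elim0, fun _ hz ↦ hz.elim⟩

theorem of_array {l : List G} (A : Fin m → Fin n → G)
    (h : (∀ i, ∑ j, A i j = 0) ∧ (∀ j, ∑ i, A i j = 0) ∧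
      ∀ z ∈ l, ∃ i j, A i j = z ∨ A i j = -z) : ZeroSumCover m n {z | z ∈ l} :=
  ⟨A, h⟩

end ZeroSumCover

end ZeroSumCover

/-- The arithmetic progression `a, a + 2, …, a + 2 (c - 1)`. -/
def run (a : ℤ) (c : ℕ) : Set ℤ :=
  {z | ∃ i < c, z = a + 2 * (i : ℤ)}

theorem run_zero (a : ℤ) : run a 0 = ∅ :=
  Set.eq_empty_of_forall_notMem fun _ ⟨_, hi, _⟩ ↦ Nat.not_lt_zero _ hi

theorem run_add (a : ℤ) (c d : ℕ) : run a (c + d) = run a c ∪ run (a + 2 * c) d := by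
  ext z
  constructor
  · rintro ⟨i, hi, rfl⟩
    rcases lt_or_ge i c with hic | hic
    · exact .inl ⟨i, hic, rfl⟩
    · exact .inr ⟨i - c, by omega, by push_cast [hic]; ring⟩
  · rintro (⟨i, hi, rfl⟩ | ⟨i, hi, rfl⟩)
    · exact ⟨i, by omega, rfl⟩
    · exact ⟨c + i, by omega, by push_cast; ring⟩

theorem run_add_subset {a : ℤ} {c d : ℕ} {X : Set ℤ} (h : run a c ⊆ X)
    (h' : run (a + 2 * c) d ⊆ X) : run a (c + d) ⊆ X := by
  rw [run_add]
  exact Set.union_subset h h'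

theorem run_subset_of_ascending {a : ℤ} {c : ℕ} {X : Set ℤ} {f : ℕ → ℤ} (h : ∀ i < c, f i ∈ X)
    (hf : ∀ i, f i = a + 2 * i) : run a c ⊆ X := by
  rintro _ ⟨i, hi, rfl⟩
  exact hf i ▸ h i hi

theorem run_subset_of_descending {a : ℤ} {c : ℕ} {X : Set ℤ} {f : ℕ → ℤ} (h : ∀ i < c, f i ∈ X)
    (hf : ∀ i, f i = a + 2 * (c - 1 - i)) : run a c ⊆ X := by
  rintro _ ⟨i, hi, rfl⟩
  convert h (c - 1 - i) (by omega) using 1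
  rw [hf]
  omega

theorem run_two_mul_subset {a : ℤ} {c : ℕ} {X : Set ℤ} {f g : ℕ → ℤ} (hf : ∀ i < c, f i ∈ X)
    (hg : ∀ i < c, g i ∈ X) (hfa : ∀ i, f i = a + 4 * i) (hga : ∀ i, g i = a + 4 * i + 2) :
    run a (2 * c) ⊆ X := by
  rintro _ ⟨i, hi, rfl⟩
  rcases Nat.mod_two_eq_zero_or_one i with hi2 | hi2
  · convert hf (i / 2) (by omega) using 1
    rw [hfa]
    omega
  · convert hg (i / 2) (by omega) using 1
    rw [hga]
    omega

/-- A linear form `z.1 + z.2 * x` in an indeterminate, evaluated at `x`. Arrays of such forms are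
finite data, so an identity between them is decided once for all `x`. -/
def evalForm (x : ℤ) : ℤ × ℤ →+ ℤ :=
  (AddMonoidHom.id ℤ).coprod (AddMonoidHom.mulRight x)

theorem evalForm_apply (x : ℤ) (z : ℤ × ℤ) : evalForm x z = z.1 + z.2 * x := rfl

/-- The forms `z, z + 2, …, z + 2 (c - 1)`, which evaluate to a `run`. -/
def formRun (z : ℤ × ℤ) (c : ℕ) : List (ℤ × ℤ) :=
  (List.range c).map fun i : ℕ ↦ (z.1 + 2 * (i : ℤ), z.2)

theorem run_subset_of_formRun {x a : ℤ} {z : ℤ × ℤ} {c : ℕ} {X : Set ℤ} (ha : a = evalForm x z)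
    (h : ∀ w ∈ formRun z c, evalForm x w ∈ X) : run a c ⊆ X := by
  rintro _ ⟨i, hi, rfl⟩
  convert h _ (List.mem_map_of_mem (List.mem_range.2 hi)) using 1
  rw [ha, evalForm_apply, evalForm_apply]
  ring

theorem run_evalForm_subset (x : ℤ) (z : ℤ × ℤ) (c : ℕ) :
    run (evalForm x z) c ⊆ evalForm x '' {w | w ∈ formRun z c} :=
  run_subset_of_formRun rfl fun w hw ↦ ⟨w, hw, rfl⟩

theorem ZeroSumCover.evalForm_union_run {m n c : ℕ} {forms : List (ℤ × ℤ)} {z : ℤ × ℤ}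
    (h : ZeroSumCover m n {w | w ∈ forms ++ formRun z c}) (x : ℤ) :
    ZeroSumCover m n (evalForm x '' {w | w ∈ forms} ∪ run (evalForm x z) c) :=
  (h.map (evalForm x)).mono_subset <| Set.union_subset
    (Set.image_mono fun _ ↦ List.mem_append_left _)
    ((run_evalForm_subset x z c).trans (Set.image_mono fun _ ↦ List.mem_append_right _))

/-- A shape is shiftable if every progression of the right length with common difference two can
be arranged in it, wherever the progression starts. -/
def Shiftable (p q : ℕ) : Prop :=
  ∀ a, ZeroSumCover p q (run a (p * q))

namespace Shiftable

variable {p q q' : ℕ}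

theorem transpose (h : Shiftable p q) : Shiftable q p := fun a ↦ by
  simpa only [mul_comm] using (h a).transpose

theorem hcat (h : Shiftable p q) (h' : Shiftable p q') : Shiftable p (q + q') := fun a ↦ by
  rw [mul_add, run_add]
  exact (h a).hcat (h' _)

theorem zero (p : ℕ) : Shiftable p 0 := fun a ↦ by
  simpa only [mul_zero, run_zero] using ZeroSumCover.empty p

theorem of_forms (h : ZeroSumCover p q {z | z ∈ formRun (0, 1) (p * q)}) : Shiftable p q :=
  fun a ↦ (h.map (evalForm a)).mono_subset <| by
    simpa only [evalForm_apply, zero_add, one_mul] using run_evalForm_subset a (0, 1) (p * q)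

theorem four_four : Shiftable 4 4 :=
  of_forms <| .of_array
    ![![(0, 1), (22, 1), (-16, -1), (-6, -1)],
      ![(-10, -1), (8, 1), (-18, -1), (20, 1)],
      ![(-14, -1), (-2, -1), (4, 1), (12, 1)],
      ![(24, 1), (-28, -1), (30, 1), (-26, -1)]]
    (by decide)

theorem four_six : Shiftable 4 6 :=
  of_forms <| .of_array
    ![![(0, 1), (32, 1), (-28, -1), (-34, -1), (-14, -1), (44, 1)],
      ![(-6, -1), (-30, -1), (10, 1), (46, 1), (-38, -1), (18, 1)],
      ![(-16, -1), (-4, -1), (26, 1), (24, 1), (12, 1), (-42, -1)],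
      ![(22, 1), (2, 1), (-8, -1), (-36, -1), (40, 1), (-20, -1)]]
    (by decide)

theorem six_six : Shiftable 6 6 :=
  of_forms <| .of_array
    ![![(60, 1), (62, 1), (-48, -1), (0, 1), (-66, -1), (-8, -1)],
      ![(-50, -1), (46, 1), (52, 1), (-64, -1), (22, 1), (-6, -1)],
      ![(-10, -1), (-68, -1), (30, 1), (54, 1), (-44, -1), (38, 1)],
      ![(16, 1), (-24, -1), (-18, -1), (40, 1), (56, 1), (-70, -1)],
      ![(-36, -1), (42, 1), (-28, -1), (-26, -1), (34, 1), (14, 1)],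
      ![(20, 1), (-58, -1), (12, 1), (-4, -1), (-2, -1), (32, 1)]]
    (by decide)

theorem two_mul_right (h4 : Shiftable p 4) (h6 : Shiftable p 6) :
    ∀ {k : ℕ}, k ≠ 1 → Shiftable p (2 * k)
  | 0, _ => zero p
  | 2, _ => h4
  | 3, _ => h6
  | k + 4, _ => (two_mul_right h4 h6 (k := k + 2) (by omega)).hcat h4

theorem of_even (hp : Even p) (hp2 : p ≠ 2) (hq : Even q) (hq2 : q ≠ 2) : Shiftable p q := by
  obtain ⟨j, rfl⟩ := hp.two_dvd
  obtain ⟨k, rfl⟩ := hq.two_dvd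
  have hj : j ≠ 1 := by omega
  have four : Shiftable (2 * j) 4 := (two_mul_right four_four four_six hj).transpose
  have six : Shiftable (2 * j) 6 := (two_mul_right four_six.transpose six_six hj).transpose
  exact two_mul_right four six (by omega)

theorem four_mul (s : ℕ) (hq : Even q) (hq2 : q ≠ 2) : Shiftable (4 * s) q :=
  of_even (Even.mul_right (by decide) s) (by omega) hq hq2

end Shiftable

section StripBlock

variable {G H : Type*} [AddCommGroup G] [AddCommGroup H]

/-- Entries of a `3 × 4` zero-sum array built from the four pairs `{b, b + h}`, `{c, c + h}`,
`{u, u + d}`, `{v, v + d}`: the first two fill the first row, the last two the second row, and the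
last four entries of the list are the resulting column sums. -/
def stripBlock (h b c u v d : G) : List G :=
  [b, b + h, c, c + h, u, u + d, v, v + d, b + u + d, b + h + u, c + v + d, c + h + v]

theorem map_stripBlock (f : G →+ H) (h b c u v d : G) :
    (stripBlock h b c u v d).map f = stripBlock (f h) (f b) (f c) (f u) (f v) (f d) := by
  simp only [stripBlock, List.map_cons, List.map_nil, map_add]

end StripBlock

/-- The entries of `g` fill four zero-sum columns of length `a` after adding `e` terms of a
progression with common difference two, wherever that progression starts. -/
def FitsColumns (a e : ℕ) (g : List ℤ) : Prop :=
  ∀ r, ZeroSumCover a 4 ({z | z ∈ g} ∪ run r e)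

theorem fitsColumns_three_stripBlock (h b c u v d : ℤ) :
    FitsColumns 3 0 (stripBlock h b c u v d) := fun r ↦ by
  refine ⟨![![b, -(b + h), -c, c + h],
    ![u + d, -u, -(v + d), v],
    ![-(b + u + d), b + h + u, c + v + d, -(c + h + v)]], fun i ↦ ?_, fun j ↦ ?_, ?_⟩
  · fin_cases i <;> simp [Fin.sum_univ_succ] <;> ring
  · fin_cases j <;> simp [Fin.sum_univ_succ]
    ring
  · simp [run_zero, stripBlock, Fin.exists_fin_succ]

theorem fitsColumns_five_stripBlock (b c u v d : ℤ) :
    FitsColumns 5 8 (stripBlock 2 b c u v d) := fun r ↦ by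
  refine ⟨![![b + 2, -b, -(c + 2), c],
    ![u + d, -u, -(v + d), v],
    ![-(b + u + d), b + 2 + u, c + v + d, -(c + 2 + v)],
    ![r, -(r + 6), -(r + 8), r + 14],
    ![-(r + 2), r + 4, r + 10, -(r + 12)]], fun i ↦ ?_, fun j ↦ ?_, ?_⟩
  · fin_cases i <;> simp [Fin.sum_univ_succ] <;> ring
  · fin_cases j <;> simp [Fin.sum_univ_succ] <;> ring
  · rintro z (hz | ⟨i, hi, rfl⟩)
    · revert z
      simp [stripBlock, Fin.exists_fin_succ]
    · interval_cases i <;> simp [Fin.exists_fin_succ]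

/-- `g` can be used in zero-sum arrays with three as well as with five rows. -/
structure IsExtendable (g : List ℤ) : Prop where
  fits_three : FitsColumns 3 0 g
  fits_five : FitsColumns 5 8 g

theorem isExtendable_stripBlock (b c u v d : ℤ) : IsExtendable (stripBlock 2 b c u v d) :=
  ⟨fitsColumns_three_stripBlock 2 b c u v d, fitsColumns_five_stripBlock b c u v d⟩

theorem isExtendable_map_evalForm_stripBlock (x : ℤ) (b c u v d : ℤ × ℤ) :
    IsExtendable ((stripBlock (2, 0) b c u v d).map (evalForm x)) := by
  have eval_two : evalForm x (2, 0) = 2 := by simp [evalForm_apply]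
  rw [map_stripBlock, eval_two]
  exact isExtendable_stripBlock ..

theorem ZeroSumCover.strip {a e : ℕ} {gs : List (List ℤ)} (h : ∀ g ∈ gs, FitsColumns a e g)
    (r : ℤ) :
    ZeroSumCover a (4 * gs.length) ({z | z ∈ gs.flatten} ∪ run r (e * gs.length)) := by
  induction gs generalizing r with
  | nil => exact (ZeroSumCover.empty a).mono_subset (by simp [run_zero])
  | cons g gs ih =>
    obtain ⟨fits, fits_tail⟩ := List.forall_mem_cons.1 h
    refine ((ih fits_tail r).hcat (fits (r + 2 * (e * gs.length : ℕ)))).mono_subset ?_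
    rw [List.length_cons, mul_add, mul_one, run_add]
    rintro z (hz | hz | hz)
    · rcases List.mem_append.1 hz with hz | hz
      · exact .inr (.inl hz)
      · exact .inl (.inl hz)
    · exact .inl (.inr hz)
    · exact .inr (.inr hz)

/-- The even numbers `2, …, 2 K` and the odd numbers `1, …, 2 l - 1` are split, up to sign, into
a core `S` and `T` blocks of twelve numbers, each of which extends an array by four columns. -/
def HasDesign (T : ℕ) (S : Set ℤ) (K l : ℕ) : Prop :=
  ∃ gs : List (List ℤ), gs.length = T ∧ (∀ g ∈ gs, IsExtendable g) ∧
    run 2 K ∪ run 1 l ⊆ (S ∪ {z | z ∈ gs.flatten}) ∪ -(S ∪ {z | z ∈ gs.flatten})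

/-- Lengths of the stretches that `L` consecutive strip blocks leave uncovered. With the evens and
the odds listed in increasing order, the blocks cover all but the stretches
`k`, `y + w`, `e` of the evens and `p`, `y`, `k + 1`, `w`, `q`, `y`, `k`, `w`, `f` of the odds,
in these orders. -/
structure Gaps where
  (k y w p q e f : ℕ)

namespace Gaps

variable (P : Gaps) (L : ℕ)

/-- The number of evens in the blocks and the gaps together, summed in increasing order. -/
def evenCount : ℕ :=
  P.k + (2 * L + ((P.y + P.w) + (2 * L + P.e)))

/-- The number of odds in the blocks and the gaps together, summed in increasing order. -/
def oddCount : ℕ :=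
  P.p + (L + (P.y + (L + (P.k + 1 + (L + (P.w + (L + (P.q + (L + (P.y + (L + (P.k + (L + (P.w +
    (L + P.f)))))))))))))))

/-- The uncovered numbers, as linear forms in `L`. -/
def forms : List (ℤ × ℤ) :=
  formRun (2, 0) P.k ++
  formRun (2 * (P.k + 1), 4) (P.y + P.w) ++
  formRun (2 * (P.k + P.y + P.w + 1), 8) P.e ++
  formRun (1, 0) P.p ++
  formRun (2 * P.p + 1, 2) P.y ++
  formRun (2 * (P.p + P.y) + 1, 4) (P.k + 1) ++
  formRun (2 * (P.p + P.y + P.k) + 3, 6) P.w ++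
  formRun (2 * (P.p + P.y + P.k + P.w) + 3, 8) P.q ++
  formRun (2 * (P.p + P.y + P.k + P.w + P.q) + 3, 10) P.y ++
  formRun (2 * (P.p + 2 * P.y + P.k + P.w + P.q) + 3, 12) P.k ++
  formRun (2 * (P.p + 2 * P.y + 2 * P.k + P.w + P.q) + 3, 14) P.w ++
  formRun (2 * (P.p + 2 * P.y + 2 * P.k + 2 * P.w + P.q) + 3, 16) P.f

/-- The `i`-th strip block, for `i < L`. As `i` grows, `b` and `c` climb by four and `u` and `v`
descend by two, so that the sums `b + 2 + u`, `c + 2 + v`, `b + u + d`, `c + v + d` climb by two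
and every entry sweeps out a run. -/
def block (i : ℕ) : List ℤ :=
  stripBlock 2 (2 * (P.k + 1) + 4 * i) (2 * (P.k + 1 + P.y + P.w) + 4 * L + 4 * i)
    (2 * (P.p + P.y + 2 * L - 1 - i) + 1) (2 * (P.p + L - 1 - i) + 1)
    (2 * (4 * L + P.y + P.k + 1 + P.w + P.q))

variable {P L} {X : Set ℤ}

theorem run_evenCount_subset (hgap : ∀ z ∈ P.forms, evalForm L z ∈ X)
    (hblock : ∀ i < L, ∀ z ∈ P.block L i, z ∈ X) : run 2 (P.evenCount L) ⊆ X := by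
  simp only [forms, List.forall_mem_append, and_assoc] at hgap
  obtain ⟨gap_low, gap_mid, gap_high, -⟩ := hgap
  simp only [block, stripBlock, List.forall_mem_cons, forall_and] at hblock
  obtain ⟨hb, hb', hc, hc', -⟩ := hblock
  refine run_add_subset (run_subset_of_formRun ?_ gap_low) <|
    run_add_subset (run_two_mul_subset hb hb' ?_ ?_) <|
    run_add_subset (run_subset_of_formRun ?_ gap_mid) <|
    run_add_subset (run_two_mul_subset hc hc' ?_ ?_) (run_subset_of_formRun ?_ gap_high)
  all_goals
    intros
    push_cast [evalForm_apply]
    ring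

theorem run_oddCount_subset (hgap : ∀ z ∈ P.forms, evalForm L z ∈ X)
    (hblock : ∀ i < L, ∀ z ∈ P.block L i, z ∈ X) : run 1 (P.oddCount L) ⊆ X := by
  simp only [forms, List.forall_mem_append, and_assoc] at hgap
  obtain ⟨-, -, -, gap_p, gap_y, gap_k, gap_w, gap_q, gap_y', gap_k', gap_w', gap_f⟩ := hgap
  simp only [block, stripBlock, List.forall_mem_cons, forall_and] at hblock
  obtain ⟨-, -, -, -, hu, hud, hv, hvd, hbud, hbu, hcvd, hcv, -⟩ := hblock
  refine run_add_subset (run_subset_of_formRun ?_ gap_p) <|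
    run_add_subset (run_subset_of_descending hv ?_) <|
    run_add_subset (run_subset_of_formRun ?_ gap_y) <|
    run_add_subset (run_subset_of_descending hu ?_) <|
    run_add_subset (run_subset_of_formRun ?_ gap_k) <|
    run_add_subset (run_subset_of_ascending hbu ?_) <|
    run_add_subset (run_subset_of_formRun ?_ gap_w) <|
    run_add_subset (run_subset_of_ascending hcv ?_) <|
    run_add_subset (run_subset_of_formRun ?_ gap_q) <|
    run_add_subset (run_subset_of_descending hvd ?_) <|
    run_add_subset (run_subset_of_formRun ?_ gap_y') <|
    run_add_subset (run_subset_of_descending hud ?_) <|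
    run_add_subset (run_subset_of_formRun ?_ gap_k') <|
    run_add_subset (run_subset_of_ascending hbud ?_) <|
    run_add_subset (run_subset_of_formRun ?_ gap_w') <|
    run_add_subset (run_subset_of_ascending hcvd ?_) (run_subset_of_formRun ?_ gap_f)
  all_goals
    intros
    push_cast [evalForm_apply]
    ring

theorem hasDesign (P : Gaps) (L : ℕ) (core : List (ℤ × ℤ)) (blocks : List (List (ℤ × ℤ)))
    (hblocks : ∀ g ∈ blocks, IsExtendable (g.map (evalForm L)))
    (hforms : ∀ z ∈ P.forms, z ∈ core ++ blocks.flatten ∨ -z ∈ core ++ blocks.flatten) :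
    HasDesign (L + blocks.length) (evalForm L '' {z | z ∈ core}) (P.evenCount L)
      (P.oddCount L) := by
  let bulk := (List.range L).map (P.block L)
  let special := blocks.map (List.map (evalForm L))
  set X := evalForm L '' {z | z ∈ core} ∪ {z | z ∈ (bulk ++ special).flatten}
  have eval_mem : ∀ z ∈ core ++ blocks.flatten, evalForm L z ∈ X := by
    intro z hz
    rcases List.mem_append.1 hz with hz | hz
    · exact .inl ⟨z, hz, rfl⟩
    · obtain ⟨g, hg, hz⟩ := List.mem_flatten.1 hz
      exact .inr <| List.mem_flatten.2 ⟨g.map (evalForm L),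
        List.mem_append_right _ (List.mem_map_of_mem hg), List.mem_map_of_mem hz⟩
  have hgap : ∀ z ∈ P.forms, evalForm L z ∈ X ∪ -X := fun z hz ↦
    (hforms z hz).imp (eval_mem z) fun h ↦ Set.mem_neg.2 (map_neg (evalForm L) z ▸ eval_mem _ h)
  have hbulk : ∀ i < L, ∀ z ∈ P.block L i, z ∈ X ∪ -X := fun i hi z hz ↦
    .inl <| .inr <| List.mem_flatten.2 ⟨P.block L i,
      List.mem_append_left _ (List.mem_map_of_mem (List.mem_range.2 hi)), hz⟩
  refine ⟨bulk ++ special, by simp [bulk, special], fun g hg ↦ ?_,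
    Set.union_subset (run_evenCount_subset hgap hbulk) (run_oddCount_subset hgap hbulk)⟩
  rcases List.mem_append.1 hg with hg | hg
  · obtain ⟨i, -, rfl⟩ := List.mem_map.1 hg
    exact isExtendable_stripBlock ..
  · obtain ⟨g, hg', rfl⟩ := List.mem_map.1 hg
    exact hblocks g hg'

theorem hasDesign_forms (P : Gaps) (L : ℕ) :
    HasDesign L (evalForm L '' {z | z ∈ P.forms}) (P.evenCount L) (P.oddCount L) :=
  P.hasDesign L P.forms [] (by simp) fun z hz ↦ .inl (List.mem_append_left _ hz)

end Gaps

theorem exists_hasDesign_empty : ∀ {T : ℕ}, T ≠ 0 → ∃ K l, K + l = 12 * T ∧ HasDesign T ∅ K l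
  | 1, _ => by
    refine ⟨4, 8, rfl, [stripBlock 2 4 11 1 2 (-10)], rfl,
      List.forall_mem_singleton.2 (isExtendable_stripBlock ..), ?_⟩
    rintro z (⟨i, hi, rfl⟩ | ⟨i, hi, rfl⟩) <;> interval_cases i <;> simp [stripBlock]
  | L + 2, _ => by
    let P : Gaps := { k := 2, y := 1, w := 3, p := 1, q := 2, e := 2, f := 0 }
    have design := P.hasDesign L []
      [stripBlock (2, 0) (5, 4) (11, 6) (-19, -8) (-16, -8) (20, 8),
        stripBlock (2, 0) (23, 12) (29, 14) (-17, -8) (-10, -4) (8, 4)]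
      (by simp [isExtendable_map_evalForm_stripBlock]) (by decide)
    refine ⟨_, _, ?_, by simpa using design⟩
    simp only [Gaps.evenCount, Gaps.oddCount, P]
    ring

theorem exists_hasDesign_three : ∀ T : ℕ, ∃ S K l, K + l = 9 + 12 * T ∧
    ZeroSumCover 3 3 S ∧ HasDesign T S K l
  | 0 => by
    refine ⟨{z | z ∈ [2, 4, 6, 8, 10, 1, 3, 5, 7]}, 5, 4, rfl,
      .of_array ![![2, -5, 3], ![6, 4, -10], ![-8, 1, 7]] (by decide), [], rfl, by simp, ?_⟩
    rintro z (⟨i, hi, rfl⟩ | ⟨i, hi, rfl⟩) <;> interval_cases i <;> simp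
  | L + 1 => by
    let P : Gaps := { k := 2, y := 3, w := 0, p := 0, q := 1, e := 4, f := 0 }
    let core : List (ℤ × ℤ) := [(2, 0), (1, 2), (3, 2), (19, 10), (4, 0), (15, 10), (17, 10),
      (5, 2), (12, 8)]
    have cover : ZeroSumCover 3 3 {z | z ∈ core} := .of_array
      ![![(2, 0), (-19, -10), (17, 10)],
        ![(1, 2), (4, 0), (-5, -2)],
        ![(-3, -2), (15, 10), (-12, -8)]]
      (by decide)
    refine ⟨_, _, _, ?_, cover.map _, P.hasDesign L core
      [stripBlock (2, 0) (6, 4) (7, 4) (-21, -12) (-23, -12) (5, 4)]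
      (by simp [isExtendable_map_evalForm_stripBlock]) (by decide)⟩
    simp only [Gaps.evenCount, Gaps.oddCount, P]
    ring

theorem exists_hasDesign_five (T : ℕ) : ∃ S K l, K + l = 15 + 12 * T ∧
    ZeroSumCover 3 5 S ∧ ZeroSumCover 5 5 (S ∪ run (2 + 2 * K) 10) ∧ HasDesign T S K l := by
  let P : Gaps := { k := 1, y := 2, w := 1, p := 0, q := 0, e := 1, f := 1 }
  have three : ZeroSumCover 3 5 {z | z ∈ P.forms} := .of_array
    ![![(2, 0), (-4, -4), (11, 10), (1, 2), (-10, -8)],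
      ![(5, 4), (-15, -12), (6, 4), (-9, -6), (13, 10)],
      ![(-7, -4), (19, 16), (-17, -14), (8, 4), (-3, -2)]]
    (by decide)
  have five : ZeroSumCover 5 5 {z | z ∈ P.forms ++ formRun (12, 8) 10} := .of_array
    ![![(-2, 0), (13, 10), (-6, -4), (-1, -2), (-4, -4)],
      ![(30, 8), (5, 4), (7, 4), (-16, -8), (-26, -8)],
      ![(10, 8), (9, 6), (-17, -14), (-22, -8), (20, 8)],
      ![(-24, -8), (-15, -12), (19, 16), (28, 8), (-8, -4)],
      ![(-14, -8), (-12, -8), (-3, -2), (11, 10), (18, 8)]]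
    (by decide)
  have next_even : evalForm T (12, 8) = 2 + 2 * (P.evenCount T : ℤ) := by
    simp only [evalForm_apply, Gaps.evenCount, P]
    push_cast
    ring
  refine ⟨_, P.evenCount T, P.oddCount T, ?_, three.map _, next_even ▸ five.evalForm_union_run T,
    P.hasDesign_forms T⟩
  simp only [Gaps.evenCount, Gaps.oddCount, P]
  ring

theorem exists_hasDesign_six (T : ℕ) : ∃ S K l, K + l = 18 + 12 * T ∧
    ZeroSumCover 3 6 S ∧ ZeroSumCover 5 6 (S ∪ run (2 + 2 * K) 12) ∧ HasDesign T S K l := by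
  let P : Gaps := { k := 1, y := 2, w := 1, p := 0, q := 0, e := 2, f := 3 }
  have three : ZeroSumCover 3 6 {z | z ∈ P.forms} := .of_array
    ![![(2, 0), (4, 4), (-3, -2), (15, 12), (-11, -10), (-7, -4)],
      ![(19, 16), (-17, -14), (-6, -4), (8, 4), (1, 2), (-5, -4)],
      ![(-21, -16), (13, 10), (9, 6), (-23, -16), (10, 8), (12, 8)]]
    (by decide)
  have five : ZeroSumCover 5 6 {z | z ∈ P.forms ++ formRun (14, 8) 12} := .of_array
    ![![(14, 8), (-12, -8), (-15, -12), (17, 14), (1, 2), (-5, -4)],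
      ![(26, 8), (11, 10), (-18, -8), (-22, -8), (-13, -10), (16, 8)],
      ![(-6, -4), (36, 8), (8, 4), (-20, -8), (10, 8), (-28, -8)],
      ![(-4, -4), (-3, -2), (2, 0), (-9, -6), (21, 16), (-7, -4)],
      ![(-30, -8), (-32, -8), (23, 16), (34, 8), (-19, -16), (24, 8)]]
    (by decide)
  have next_even : evalForm T (14, 8) = 2 + 2 * (P.evenCount T : ℤ) := by
    simp only [evalForm_apply, Gaps.evenCount, P]
    push_cast
    ring
  refine ⟨_, P.evenCount T, P.oddCount T, ?_, three.map _, next_even ▸ five.evalForm_union_run T,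
    P.hasDesign_forms T⟩
  simp only [Gaps.evenCount, Gaps.oddCount, P]
  ring

/-- The integers `2, 4, …, 2 K` and `1, 3, …, 2 l - 1`, of which there are `m * n`, can be arranged
up to sign in an `m × n` array with zero row and column sums. They represent every nonzero residue
modulo `2 * m * n + 1` up to sign. -/
def HasParityCover (m n : ℕ) : Prop :=
  ∃ K l, K + l = m * n ∧ ZeroSumCover m n (run 2 K ∪ run 1 l)

namespace HasParityCover

variable {m n p : ℕ}

theorem transpose (h : HasParityCover m n) : HasParityCover n m := by
  obtain ⟨K, l, card, cover⟩ := h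
  exact ⟨K, l, card.trans (mul_comm m n), cover.transpose⟩

theorem vcat_shiftable (h : HasParityCover m n) (h' : Shiftable p n) :
    HasParityCover (m + p) n := by
  obtain ⟨K, l, card, cover⟩ := h
  refine ⟨K + p * n, l, by rw [add_right_comm, card, add_mul],
    (cover.vcat (h' (2 + 2 * K))).mono_subset ?_⟩
  rw [run_add, Set.union_right_comm]

theorem of_shiftable (h : Shiftable m n) : HasParityCover m n :=
  ⟨m * n, 0, rfl, (h 2).mono_subset (by rw [run_zero, Set.union_empty])⟩

theorem of_cover_union_run {K l d : ℕ} {X : Set ℤ} (sub : run 2 K ∪ run 1 l ⊆ X ∪ -X)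
    (h : ZeroSumCover m n (X ∪ run (2 + 2 * K) d)) (card : K + l + d = m * n) :
    HasParityCover m n := by
  refine ⟨K + d, l, by omega, h.mono ?_⟩
  rw [run_add, Set.union_right_comm]
  rintro z (hz | hz)
  · exact (sub hz).imp .inl .inl
  · exact .inl (.inr hz)

end HasParityCover

namespace ZeroSumCover

variable {a b c e f : ℕ} {r : ℤ} {S : Set ℤ}

theorem hcat_strip {gs : List (List ℤ)} (core : ZeroSumCover a b (S ∪ run r c))
    (fits : ∀ g ∈ gs, FitsColumns a e g) :
    ZeroSumCover a (b + 4 * gs.length)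
      (S ∪ {z | z ∈ gs.flatten} ∪ run r (c + e * gs.length)) := by
  refine (core.hcat (strip fits (r + 2 * c))).mono_subset ?_
  rw [run_add, Set.union_union_union_comm]

theorem hcat_vcat_strip {right bottom : List (List ℤ)} (core : ZeroSumCover a b (S ∪ run r c))
    (fits_right : ∀ g ∈ right, FitsColumns a e g) (fits_bottom : ∀ g ∈ bottom, FitsColumns b f g) :
    ZeroSumCover (a + 4 * bottom.length) (b + 4 * right.length)
      (S ∪ {z | z ∈ (right ++ bottom).flatten} ∪ run r (c + e * right.length +
        (f * bottom.length + 4 * bottom.length * (4 * right.length)))) := by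
  have corner : Shiftable (4 * bottom.length) (4 * right.length) :=
    .four_mul _ (Even.mul_right (by decide) _) (by omega)
  have lower (r' : ℤ) :=
    (strip fits_bottom r').transpose.hcat (corner (r' + 2 * ↑(f * bottom.length)))
  refine ((core.hcat_strip fits_right).vcat
    (lower (r + 2 * ↑(c + e * right.length)))).mono_subset ?_
  rw [run_add, run_add _ (f * _)]
  intro z
  simp only [List.flatten_append, List.mem_append, Set.mem_union, Set.mem_ofPred_eq]
  tauto

end ZeroSumCover

namespace HasDesign

variable {S : Set ℤ} {K l a b c e f s t : ℕ}

theorem hasParityCover_hcat (h : HasDesign t S K l)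
    (core : ZeroSumCover a b (S ∪ run (2 + 2 * K) c))
    (fits : ∀ g, IsExtendable g → FitsColumns a e g)
    (card : K + l + (c + e * t) = a * (b + 4 * t)) : HasParityCover a (b + 4 * t) := by
  obtain ⟨gs, rfl, ext, sub⟩ := h
  exact .of_cover_union_run sub (core.hcat_strip fun g hg ↦ fits g (ext g hg)) card

theorem hasParityCover_hcat_vcat (h : HasDesign (t + s) S K l)
    (core : ZeroSumCover a b (S ∪ run (2 + 2 * K) c))
    (fits_right : ∀ g, IsExtendable g → FitsColumns a e g)
    (fits_bottom : ∀ g, IsExtendable g → FitsColumns b f g)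
    (card : K + l + (c + e * t + (f * s + 4 * s * (4 * t))) = (a + 4 * s) * (b + 4 * t)) :
    HasParityCover (a + 4 * s) (b + 4 * t) := by
  obtain ⟨gs, length_gs, ext, sub⟩ := h
  obtain ⟨right, bottom, rfl, rfl, rfl⟩ : ∃ right bottom : List (List ℤ),
      gs = right ++ bottom ∧ right.length = t ∧ bottom.length = s :=
    ⟨gs.take t, gs.drop t, (List.take_append_drop t gs).symm, by simp [length_gs],
      by simp [length_gs]⟩
  obtain ⟨ext_right, ext_bottom⟩ := List.forall_mem_append.1 ext
  exact .of_cover_union_run sub (core.hcat_vcat_strip (fun g hg ↦ fits_right g (ext_right g hg))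
    fun g hg ↦ fits_bottom g (ext_bottom g hg)) card

end HasDesign

theorem exists_eq_three_or_five_add_four_mul {m : ℕ} (hm : 3 ≤ m) (odd : Odd m) :
    ∃ s, m = 3 + 4 * s ∨ m = 5 + 4 * s := by
  obtain ⟨k, rfl⟩ := odd
  exact ⟨(k - 1) / 2, by omega⟩

namespace HasParityCover

theorem three_five_four_mul {t : ℕ} (ht : t ≠ 0) :
    HasParityCover 3 (4 * t) ∧ HasParityCover 5 (4 * t) := by
  obtain ⟨K, l, card, design⟩ := exists_hasDesign_empty ht
  have core (a : ℕ) : ZeroSumCover a 0 (∅ ∪ run (2 + 2 * K) 0) := by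
    simpa only [run_zero, Set.union_empty] using ZeroSumCover.empty a
  rw [← zero_add (4 * t)]
  exact ⟨design.hasParityCover_hcat (core 3) (fun _ ↦ IsExtendable.fits_three) (by omega),
    design.hasParityCover_hcat (core 5) (fun _ ↦ IsExtendable.fits_five) (by omega)⟩

theorem three_five_six_add (t : ℕ) :
    HasParityCover 3 (6 + 4 * t) ∧ HasParityCover 5 (6 + 4 * t) := by
  obtain ⟨S, K, l, card, three, five, design⟩ := exists_hasDesign_six t
  have core : ZeroSumCover 3 6 (S ∪ run (2 + 2 * K) 0) := by
    rwa [run_zero, Set.union_empty]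
  exact ⟨design.hasParityCover_hcat core (fun _ ↦ IsExtendable.fits_three) (by omega),
    design.hasParityCover_hcat five (fun _ ↦ IsExtendable.fits_five) (by omega)⟩

theorem three_five_even {n : ℕ} (hn : 3 ≤ n) (even : Even n) :
    HasParityCover 3 n ∧ HasParityCover 5 n := by
  obtain ⟨k, rfl⟩ := even
  obtain ⟨t, rfl⟩ | ⟨t, rfl⟩ : (∃ t, k = 2 * t) ∨ ∃ t, k = 2 * t + 3 := by
    rcases Nat.mod_two_eq_zero_or_one k with h | h
    · exact .inl ⟨k / 2, by omega⟩
    · exact .inr ⟨(k - 3) / 2, by omega⟩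
  · convert three_five_four_mul (t := t) (by omega) using 2 <;> ring
  · convert three_five_six_add t using 2 <;> ring

theorem even_even {m n : ℕ} (hm : 3 ≤ m) (hn : 3 ≤ n) (even_m : Even m) (even_n : Even n) :
    HasParityCover m n :=
  .of_shiftable (.of_even even_m (by omega) even_n (by omega))

theorem odd_even {m n : ℕ} (hm : 3 ≤ m) (hn : 3 ≤ n) (odd : Odd m) (even : Even n) :
    HasParityCover m n := by
  obtain ⟨three, five⟩ := three_five_even hn even
  have shiftable (s : ℕ) : Shiftable (4 * s) n := .four_mul s even (by omega)
  obtain ⟨s, rfl | rfl⟩ := exists_eq_three_or_five_add_four_mul hm odd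
  · exact three.vcat_shiftable (shiftable s)
  · exact five.vcat_shiftable (shiftable s)

theorem three_add_three_add (s t : ℕ) : HasParityCover (3 + 4 * s) (3 + 4 * t) := by
  obtain ⟨S, K, l, card, core, design⟩ := exists_hasDesign_three (t + s)
  rw [← Set.union_empty S, ← run_zero (2 + 2 * K)] at core
  exact design.hasParityCover_hcat_vcat core (fun _ ↦ IsExtendable.fits_three)
    (fun _ ↦ IsExtendable.fits_three) (by linear_combination card)

theorem three_add_five_add (s t : ℕ) : HasParityCover (3 + 4 * s) (5 + 4 * t) := by
  obtain ⟨S, K, l, card, core, -, design⟩ := exists_hasDesign_five (t + s)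
  rw [← Set.union_empty S, ← run_zero (2 + 2 * K)] at core
  exact design.hasParityCover_hcat_vcat core (fun _ ↦ IsExtendable.fits_three)
    (fun _ ↦ IsExtendable.fits_five) (by linear_combination card)

theorem five_add_five_add (s t : ℕ) : HasParityCover (5 + 4 * s) (5 + 4 * t) := by
  obtain ⟨S, K, l, card, -, core, design⟩ := exists_hasDesign_five (t + s)
  exact design.hasParityCover_hcat_vcat core (fun _ ↦ IsExtendable.fits_five)
    (fun _ ↦ IsExtendable.fits_five) (by linear_combination card)

theorem odd_odd {m n : ℕ} (hm : 3 ≤ m) (hn : 3 ≤ n) (odd_m : Odd m) (odd_n : Odd n) :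
    HasParityCover m n := by
  obtain ⟨s, rfl | rfl⟩ := exists_eq_three_or_five_add_four_mul hm odd_m <;>
  obtain ⟨t, rfl | rfl⟩ := exists_eq_three_or_five_add_four_mul hn odd_n
  · exact three_add_three_add s t
  · exact three_add_five_add s t
  · exact (three_add_five_add t s).transpose
  · exact five_add_five_add s t

theorem of_three_le {m n : ℕ} (hm : 3 ≤ m) (hn : 3 ≤ n) : HasParityCover m n := by
  rcases m.even_or_odd with even_m | odd_m <;> rcases n.even_or_odd with even_n | odd_n
  · exact even_even hm hn even_m even_n
  · exact (odd_even hn hm odd_n even_m).transpose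
  · exact odd_even hm hn odd_m even_n
  · exact odd_odd hm hn odd_m odd_n

end HasParityCover

section IsHeffterArray

variable {G : Type*} [AddCommGroup G] {m n : ℕ} {A : Fin m → Fin n → G}

/-- A totally filled Heffter array with entries in an arbitrary abelian group `G`: the rows and the
columns sum to zero, and the entries represent every nonzero element exactly once up to sign. -/
structure IsHeffterArray (A : Fin m → Fin n → G) : Prop where
  row_sum : ∀ i, ∑ j, A i j = 0
  col_sum : ∀ j, ∑ i, A i j = 0
  existsUnique : ∀ x : G, x ≠ 0 → ∃! p : Fin m × Fin n, A p.1 p.2 = x ∨ A p.1 p.2 = -x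

namespace IsHeffterArray

theorem transpose (h : IsHeffterArray A) : IsHeffterArray fun j i ↦ A i j where
  row_sum := h.col_sum
  col_sum := h.row_sum
  existsUnique x hx :=
    ((Equiv.prodComm _ _).existsUnique_congr_left (p := fun p ↦ A p.1 p.2 = x ∨ _)).1
      (h.existsUnique x hx)

theorem three_le_rows [Nontrivial G] (h : IsHeffterArray A) : 3 ≤ m := by
  obtain ⟨x, hx⟩ := exists_ne (0 : G)
  obtain ⟨⟨i, j⟩, hij : A i j = x ∨ A i j = -x, unique⟩ := h.existsUnique x hx
  have sum_zero := h.col_sum j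
  by_contra! hm
  interval_cases m
  · exact i.elim0
  · have entry_zero : A i j = 0 := by
      rwa [Fin.sum_univ_one, ← Subsingleton.elim i 0] at sum_zero
    simp [entry_zero, eq_comm, hx] at hij
  · have neg_entry : A (1 - i) j = -A i j := by
      rw [Fin.sum_univ_two] at sum_zero
      fin_cases i
      · exact eq_neg_of_add_eq_zero_right sum_zero
      · exact eq_neg_of_add_eq_zero_left sum_zero
    have same_row : 1 - i = i := congrArg Prod.fst <| unique (1 - i, j) <| by
      rcases hij with h | h <;> simp [neg_entry, h]
    fin_cases i <;> simp at same_row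

theorem three_le_columns [Nontrivial G] (h : IsHeffterArray A) : 3 ≤ n :=
  h.transpose.three_le_rows

end IsHeffterArray

end IsHeffterArray

theorem existsUnique_eq_or_eq_neg_of_card {G ι : Type*} [AddGroup G] [Fintype G] [Fintype ι]
    (card : Fintype.card G = 2 * Fintype.card ι + 1) {f : ι → G}
    (cover : ∀ x ≠ 0, ∃ i, f i = x ∨ f i = -x) (x : G) (hx : x ≠ 0) :
    ∃! i, f i = x ∨ f i = -x := by
  let signed : Option (ι ⊕ ι) → G := fun o ↦ o.elim 0 (Sum.elim f fun i ↦ -f i)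
  have surjective : signed.Surjective := by
    intro y
    rcases eq_or_ne y 0 with rfl | hy
    · exact ⟨none, rfl⟩
    · obtain ⟨i, h | h⟩ := cover y hy
      · exact ⟨some (.inl i), h⟩
      · exact ⟨some (.inr i), neg_eq_iff_eq_neg.2 h⟩
  have injective : signed.Injective :=
    (surjective.bijective_of_nat_card_le (by simp [card, two_mul])).injective
  refine existsUnique_of_exists_of_unique (cover x hx) fun i j hi hj ↦ ?_
  have same_or_opposite : f i = f j ∨ f i = -f j := by
    rcases hi with hi | hi <;> rcases hj with hj | hj <;> simp [hi, hj]
  rcases same_or_opposite with h | h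
  · simpa using @injective (some (.inl i)) (some (.inl j)) h
  · simpa using @injective (some (.inl i)) (some (.inr j)) h

theorem mem_cast_run_union_run_or_neg_mem {K l N : ℕ} (hN : N = 2 * (K + l) + 1) (x : ZMod N)
    (hx : x ≠ 0) :
    ∃ z ∈ run 2 K ∪ run 1 l, x = (z : ZMod N) ∨ x = -(z : ZMod N) := by
  have : NeZero N := ⟨by omega⟩
  have val_pos : 0 < x.val := ZMod.val_pos.2 hx
  have val_lt : x.val < N := x.val_lt
  have cast_val : ((x.val : ℤ) : ZMod N) = x := by simp
  have cast_sub : (((N : ℤ) - x.val : ℤ) : ZMod N) = -x := by simp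
  -- `x.val` and `N - x.val` have opposite parities because the modulus is odd.
  have small_or_large : (x.val : ℤ) ∈ run 2 K ∪ run 1 l ∨ (N - x.val : ℤ) ∈ run 2 K ∪ run 1 l := by
    obtain ⟨i, hi | hi⟩ := x.val.even_or_odd'
    · rcases le_or_gt i K with h | h
      · exact .inl (.inl ⟨i - 1, by omega, by omega⟩)
      · exact .inr (.inr ⟨K + l - i, by omega, by omega⟩)
    · rcases lt_or_ge i l with h | h
      · exact .inl (.inr ⟨i, h, by omega⟩)
      · exact .inr (.inl ⟨K + l - i - 1, by omega, by omega⟩)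
  rcases small_or_large with h | h
  · exact ⟨_, h, .inl cast_val.symm⟩
  · exact ⟨_, h, .inr (by rw [cast_sub, neg_neg])⟩

theorem HasParityCover.exists_isHeffterArray {m n : ℕ} (h : HasParityCover m n) :
    ∃ A : Fin m → Fin n → ZMod (2 * m * n + 1), IsHeffterArray A := by
  obtain ⟨K, l, card, cover⟩ := h
  have modulus : 2 * m * n + 1 = 2 * (K + l) + 1 := by rw [card, mul_assoc]
  have residues : ZeroSumCover m n {x : ZMod (2 * m * n + 1) | x ≠ 0} :=
    (cover.map (Int.castAddHom _)).mono fun x hx ↦ by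
      obtain ⟨z, hz, rfl | rfl⟩ := mem_cast_run_union_run_or_neg_mem modulus x hx
      · exact .inl ⟨z, hz, rfl⟩
      · exact .inr ⟨z, hz, (neg_neg _).symm⟩
  obtain ⟨A, row_sum, col_sum, hits⟩ := residues
  refine ⟨A, row_sum, col_sum,
    existsUnique_eq_or_eq_neg_of_card (f := fun p : Fin m × Fin n ↦ A p.1 p.2) ?_ ?_⟩
  · simp [ZMod.card, mul_assoc]
  · exact fun x hx ↦ Prod.exists.2 (hits x hx)

/-- There exists a totally filled Heffter array `H(m,n)` if and only if `m, n ≥ 3`. -/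
theorem heffter_array_total_exists_iff (m n : ℕ) (hm : 0 < m) (hn : 0 < n) :
    (∃ A : Fin m → Fin n → ZMod (2 * m * n + 1),
      (∀ i : Fin m, ∑ j : Fin n, A i j = 0) ∧
      (∀ j : Fin n, ∑ i : Fin m, A i j = 0) ∧
      (∀ x : ZMod (2 * m * n + 1), x ≠ 0 →
        ∃! p : Fin m × Fin n, A p.1 p.2 = x ∨ A p.1 p.2 = -x))
    ↔ (3 ≤ m ∧ 3 ≤ n) := by
  constructor
  · rintro ⟨A, row_sum, col_sum, existsUnique⟩
    have heffter : IsHeffterArray A := ⟨row_sum, col_sum, existsUnique⟩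
    have : Fact (1 < 2 * m * n + 1) := ⟨by simpa using ⟨hm, hn⟩⟩
    exact ⟨heffter.three_le_rows, heffter.three_le_columns⟩
  · rintro ⟨three_le_m, three_le_n⟩
    obtain ⟨A, heffter⟩ := (HasParityCover.of_three_le three_le_m three_le_n).exists_isHeffterArray
    exact ⟨A, heffter.row_sum, heffter.col_sum, heffter.existsUnique⟩
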